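/- arXiv:1301.2687 — 3 statements merged into one kernel-verified Lean document; each statement's English description precedes it below -/
import Mathlib

section
/- For every integer n ≥ 3, every N ∈ ℕ, and every λ, μ ∈ ℂ with λ, μ ∉ {m − n/2 : m ∈ ℕ}, the homogeneous degree-N polynomial p_N(λ,μ) ∈ ℂ[r,s,t] satisfies D₁(λ,μ)(p_N(λ,μ)) = 0 and D₂(λ,μ)(p_N(λ,μ)) = 0. -/
/-!
Write `a = λ + n/2`, `b = μ + n/2`, `x = λ - N + 1`, `y = μ - N + 1`, so that `a - b = x - y`.
Factoring `(-1)^(i+j) (-N)_(i+j) / (2^(i+j) i! j! (1-a)_i (1-b)_j)` out of the coefficient of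
`s^i t^j r^(N-i-j)` leaves a numerator `c i j`, and comparing coefficients turns `D₁ p = 0` and
`D₂ p = 0` into the division-free recurrences

* `c (i+1) j = (y + i - j) c i j + j (j - b) c i (j-1)`,
* `c i (j+1) = (x + j - i) c i j + i (i - a) c (i-1) j`.

The first one, started from `c 0 j = (x)_j`, defines `c` (`cRec`). Because `a - b = x - y`, the two
recurrences are compatible, so `c` satisfies the second one too (`cRec_succ_right`); hence `c` is
symmetric under `(i, x, a) ↔ (j, y, b)` (`cRec_symm`). After reversing its summation, the sum
defining `A` becomes

`∑ m, m! binom(i,m) binom(j,m) (1+i-m-a)_m (y)_(i-m) (x-i+m)_(j-m)`,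

which makes sense for all `i, j` and satisfies the second recurrence by Pascal's rule
(`cSum_succ_right`). It therefore equals `c`, and by symmetry so do the coefficients with `i > j`,
although they are defined by the exchanged formula (`Aext_eq`).
-/

open MvPolynomial Finset

noncomputable section

/-- Pochhammer symbol `(x)_l = x (x+1) ⋯ (x+l-1)`. -/
def pk (x : ℂ) (l : ℕ) : ℂ := Polynomial.eval x (ascPochhammer ℂ l)

/-- The coefficient `A_{i,j}(λ,μ)` (intended for `i ≤ j`). -/
def A (n N : ℕ) (lam mu : ℂ) (i j : ℕ) : ℂ :=
  ((-1 : ℂ) ^ (i + j) * pk (-(N : ℂ)) (i + j) * pk (lam - N + 1) (j - i)) /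
      ((2 : ℂ) ^ (i + j) * (Nat.factorial i : ℂ) * (Nat.factorial j : ℂ) *
        pk (1 - (n : ℂ) / 2 - mu) j * pk (lam + (n : ℂ) / 2 - i) i) *
    ∑ k ∈ Finset.range (i + 1),
      (-1 : ℂ) ^ k * (Nat.choose i k : ℂ) * pk ((j : ℂ) - i + 1 + k) (i - k) *
        pk (lam + (n : ℂ) / 2 - i) (i - k) * pk (mu - (N : ℂ) + 1) k *
        pk (lam - (N : ℂ) + 1 - k) k

/-- The coefficient family extended by the symmetry convention
`A_{i,j}(λ,μ) = A_{j,i}(μ,λ)` for `i > j`. -/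
def Aext (n N : ℕ) (lam mu : ℂ) (i j : ℕ) : ℂ :=
  if i ≤ j then A n N lam mu i j else A n N mu lam j i

/-- The polynomial ring `ℂ[r,s,t]`. -/
abbrev S := MvPolynomial (Fin 3) ℂ

def rr : S := X 0
def ss : S := X 1
def tt : S := X 2

/-- The polynomial `p_N(λ,μ) = Σ_{i+j≤N} A_{i,j}(λ,μ) s^i t^j r^{N-i-j}`. -/
def pN (n N : ℕ) (lam mu : ℂ) : S :=
  ∑ i ∈ Finset.range (N + 1), ∑ j ∈ Finset.range (N + 1 - i),
    C (Aext n N lam mu i j) * ss ^ i * tt ^ j * rr ^ (N - i - j)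

def dr (p : S) : S := pderiv 0 p
def ds (p : S) : S := pderiv 1 p
def dt (p : S) : S := pderiv 2 p
def Er (p : S) : S := rr * dr p
def Es (p : S) : S := ss * ds p
def Et (p : S) : S := tt * dt p

/-- `D₁(λ,μ) = ½ t ∂_r² + (n+2λ−2−2E^s)∂_s − (E^r+2E^t−μ)∂_r`. -/
def D1 (n : ℕ) (lam mu : ℂ) (p : S) : S :=
  C (1 / 2 : ℂ) * tt * dr (dr p) +
    (C ((n : ℂ) + 2 * lam - 2) * ds p - 2 * Es (ds p)) -
    (Er (dr p) + 2 * Et (dr p) - C mu * dr p)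

/-- `D₂(λ,μ) = ½ s ∂_r² + (n+2μ−2−2E^t)∂_t − (E^r+2E^s−λ)∂_r`. -/
def D2 (n : ℕ) (lam mu : ℂ) (p : S) : S :=
  C (1 / 2 : ℂ) * ss * dr (dr p) +
    (C ((n : ℂ) + 2 * mu - 2) * dt p - 2 * Et (dt p)) -
    (Er (dr p) + 2 * Es (dr p) - C lam * dr p)


/-! ### Pochhammer symbols -/

lemma pk_zero (x : ℂ) : pk x 0 = 1 := by simp [pk]

lemma pk_succ (x : ℂ) (l : ℕ) : pk x (l + 1) = pk x l * (x + l) := by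
  simp [pk, ascPochhammer_succ_right]

lemma pk_add (x : ℂ) (k l : ℕ) : pk x (k + l) = pk x k * pk (x + k) l := by
  induction l with
  | zero => simp [pk_zero]
  | succ l ih => rw [← add_assoc, pk_succ, pk_succ, ih]; push_cast; ring

lemma pk_succ_left (x : ℂ) (l : ℕ) : pk x (l + 1) = x * pk (x + 1) l := by
  rw [add_comm l 1, pk_add, pk_succ, pk_zero]; simp

lemma pk_ne_zero {x : ℂ} (l : ℕ) (h : ∀ m : ℕ, x + m ≠ 0) : pk x l ≠ 0 := by
  induction l with
  | zero => simp [pk_zero]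
  | succ l ih => rw [pk_succ]; exact mul_ne_zero ih (h l)

/-- Reversal of the factors of a Pochhammer symbol. -/
lemma pk_reflect (x : ℂ) (m : ℕ) : pk (x - m) m = (-1) ^ m * pk (1 - x) m := by
  induction m generalizing x with
  | zero => simp [pk_zero]
  | succ m ih =>
    have h : x - ((m + 1 : ℕ) : ℂ) = (x - 1) - m := by push_cast; ring
    rw [h, pk_succ, ih, pk_succ_left]
    ring_nf

lemma pk_nat (d m : ℕ) : pk ((d : ℂ) + 1) m = m.factorial * (d + m).choose m := by
  have h := ascPochhammer_nat_eq_ascFactorial (d + 1) m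
  have h2 : pk ((d : ℂ) + 1) m = (((d + 1).ascFactorial m : ℕ) : ℂ) := by
    rw [← h, pk]
    have := ascPochhammer_eval_cast (S := ℂ) m (d + 1)
    rw [this]; push_cast; rfl
  rw [h2, Nat.ascFactorial_eq_factorial_mul_choose]
  push_cast; rfl

/-! ### The normalised coefficients -/

/-- The numerators `c i j` of the coefficients of `p_N`, defined by the recurrence in `i` that
expresses `D₁ p_N = 0`; here `x = λ - N + 1`, `y = μ - N + 1`, `b = μ + n/2`. For `j = 0` the value
`c i (j - 1)` is multiplied by `0`. -/
def cRec (x y b : ℂ) : ℕ → ℕ → ℂ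
  | 0, j => pk x j
  | i + 1, j => (y + i - j) * cRec x y b i j + j * (j - b) * cRec x y b i (j - 1)

lemma cRec_zero (x y b : ℂ) (j : ℕ) : cRec x y b 0 j = pk x j := rfl

lemma cRec_succ (x y b : ℂ) (i j : ℕ) :
    cRec x y b (i + 1) j =
      (y + i - j) * cRec x y b i j + j * (j - b) * cRec x y b i (j - 1) := rfl

lemma cRec_left (x y b : ℂ) (i : ℕ) : cRec x y b i 0 = pk y i := by
  induction i with
  | zero => simp [cRec_zero, pk_zero]
  | succ i ih => rw [cRec_succ, ih, pk_succ]; simp; ring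

/-- Compatibility of the two recurrences: since `a - b = x - y`, the recurrence in `j` that
expresses `D₂ p_N = 0` follows from the one in `i`. -/
lemma cRec_succ_right (x y a b : ℂ) (h : a - b = x - y) (i j : ℕ) :
    cRec x y b i (j + 1) =
      (x + j - i) * cRec x y b i j + i * (i - a) * cRec x y b (i - 1) j := by
  induction i generalizing j with
  | zero => simp [cRec_zero, pk_succ]; ring
  | succ i ih =>
    have hx : x = a - b + y := by rw [h]; ring
    have e1 := ih j
    rw [cRec_succ x y b i (j + 1), cRec_succ x y b i j]
    simp only [Nat.add_sub_cancel]
    -- the terms in `c i (j-1)` and `c (i-1) j` are both traded for `c i j` and `c (i-1) (j-1)`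
    have e2 : (j : ℂ) * cRec x y b i j =
        j * ((x + j - 1 - i) * cRec x y b i (j - 1)
          + i * (i - a) * cRec x y b (i - 1) (j - 1)) := by
      cases j with
      | zero => simp
      | succ j => rw [ih j]; simp only [Nat.add_sub_cancel]; push_cast; ring
    have e3 : (i : ℂ) * cRec x y b i j =
        i * ((y + i - 1 - j) * cRec x y b (i - 1) j
          + j * (j - b) * cRec x y b (i - 1) (j - 1)) := by
      cases i with
      | zero => simp
      | succ i => rw [cRec_succ x y b i j]; simp only [Nat.add_sub_cancel]; push_cast; ring
    push_cast
    rw [e1]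
    subst hx
    linear_combination (j - b) * e2 - (i - a) * e3

/-- The numerators are symmetric under exchanging the roles of the two variables. -/
lemma cRec_symm (x y a b : ℂ) (h : a - b = x - y) (i j : ℕ) :
    cRec x y b i j = cRec y x a j i := by
  induction i generalizing j with
  | zero => rw [cRec_zero, cRec_left]
  | succ i ih =>
    rw [cRec_succ, ih, ih, cRec_succ_right y x b a (by linear_combination -h)]

/-- The closed form of the numerators as a single sum. Terms with `m > j` vanish because of the
binomial coefficient, which makes the truncated `j - m` harmless. -/
def cSum (x y a : ℂ) (i j : ℕ) : ℂ :=
  ∑ m ∈ range (i + 1), (m.factorial : ℂ) * i.choose m * j.choose m *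
    pk (1 + i - m - a) m * pk y (i - m) * pk (x - i + m) (j - m)

lemma cSum_left (x y a : ℂ) (i : ℕ) : cSum x y a i 0 = pk y i := by
  rw [cSum, Finset.sum_range_succ', Finset.sum_eq_zero]
  · simp [pk_zero]
  · intro m _; simp

/-- The sum satisfies the recurrence in `j`; summand by summand this is Pascal's rule. -/
lemma cSum_succ_right (x y a : ℂ) (i j : ℕ) :
    cSum x y a i (j + 1) =
      (x + j - i) * cSum x y a i j + i * (i - a) * cSum x y a (i - 1) j := by
  cases i with
  | zero => simp [cSum, pk_zero, pk_succ]; ring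
  | succ i =>
    simp only [Nat.add_sub_cancel]
    rw [cSum, cSum, Finset.sum_range_succ', Finset.sum_range_succ' _ (i + 1), cSum, mul_add,
      Finset.mul_sum, Finset.mul_sum, add_right_comm, ← Finset.sum_add_distrib]
    congr 1
    · apply Finset.sum_congr rfl
      intro m hm
      have hc : ((i + 1).choose (m + 1) : ℂ) * (m + 1) = (i + 1) * i.choose m := by
        exact_mod_cast (Nat.add_one_mul_choose_eq i m).symm
      have hp : pk (1 + ((i + 1 : ℕ) : ℂ) - ((m + 1 : ℕ) : ℂ) - a) (m + 1)
          = pk (1 + i - m - a) m * (i + 1 - a) := by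
        rw [pk_succ]; push_cast; ring_nf
      have hx : x - ((i + 1 : ℕ) : ℂ) + ((m + 1 : ℕ) : ℂ) = x - i + m := by push_cast; ring
      rw [hp, hx, Nat.factorial_succ]
      simp only [Nat.add_sub_add_right]
      rw [Nat.choose_succ_succ j m]
      rcases lt_trichotomy m j with hlt | heq | hgt
      · obtain ⟨d, rfl⟩ := Nat.exists_eq_add_of_lt hlt
        have e1 : m + d + 1 - m = d + 1 := by omega
        have e2 : m + d + 1 - (m + 1) = d := by omega
        rw [e1, e2, pk_succ]
        push_cast
        linear_combination ((m.factorial : ℂ) * ((m + d + 1).choose m) *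
          (pk (1 + i - m - a) m * (i + 1 - a)) * pk y (i - m) *
          (pk (x - i + m) d * (x - i + m + d))) * hc
      · subst heq
        simp [pk_zero]
        linear_combination ((m.factorial : ℂ) *
          (pk (1 + i - m - a) m * (i + 1 - a)) * pk y (i - m)) * hc
      · simp [Nat.choose_eq_zero_of_lt hgt, Nat.choose_eq_zero_of_lt (Nat.lt_succ_of_lt hgt)]
    · simp [pk_zero, pk_succ]; ring

lemma cSum_eq_cRec (x y a b : ℂ) (h : a - b = x - y) (i j : ℕ) :
    cSum x y a i j = cRec x y b i j := by
  induction j generalizing i with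
  | zero => rw [cSum_left, cRec_left]
  | succ j ih => rw [cSum_succ_right, ih, ih, cRec_succ_right x y a b h]

/-- The factor of the coefficient of `s^i t^j r^(N-i-j)` depending only on `N`, `i` and `j`. -/
def wt (N i j : ℕ) : ℂ :=
  (-1) ^ (i + j) * pk (-(N : ℂ)) (i + j) / (2 ^ (i + j) * i.factorial * j.factorial)

lemma wt_symm (N i j : ℕ) : wt N i j = wt N j i := by
  rw [wt, wt, add_comm i j]; ring

lemma wt_succ_left (N i j : ℕ) :
    2 * (i + 1) * wt N (i + 1) j = (N - i - j) * wt N i j := by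
  have h1 : (i.factorial : ℂ) ≠ 0 := by exact_mod_cast i.factorial_ne_zero
  have h2 : (j.factorial : ℂ) ≠ 0 := by exact_mod_cast j.factorial_ne_zero
  have h3 : (i : ℂ) + 1 ≠ 0 := by exact_mod_cast i.succ_ne_zero
  rw [wt, wt, show i + 1 + j = (i + j) + 1 by ring, pk_succ, Nat.factorial_succ]
  push_cast
  field_simp
  ring

lemma wt_succ_right (N i j : ℕ) :
    2 * (j + 1) * wt N i (j + 1) = (N - i - j) * wt N i j := by
  rw [wt_symm, wt_succ_left, wt_symm]; ring

/-- For `i ≤ j` the defining sum of `A` is, up to reversal of summation and of Pochhammer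
factors, the sum `cSum`. -/
lemma A_eq (n N : ℕ) (lam mu : ℂ) (i j : ℕ) (hij : i ≤ j) :
    A n N lam mu i j = wt N i j *
      cSum (lam - N + 1) (mu - N + 1) (lam + (n : ℂ) / 2) i j /
        (pk (1 - (lam + (n : ℂ) / 2)) i * pk (1 - (mu + (n : ℂ) / 2)) j) := by
  rw [A, wt]
  generalize hx : lam - (N : ℂ) + 1 = x
  generalize hy : mu - (N : ℂ) + 1 = y
  generalize ha : lam + (n : ℂ) / 2 = a
  have hb : 1 - (n : ℂ) / 2 - mu = 1 - (mu + (n : ℂ) / 2) := by ring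
  rw [hb, pk_reflect a i]
  have key : pk x (j - i) * ∑ k ∈ Finset.range (i + 1),
      (-1 : ℂ) ^ k * (Nat.choose i k : ℂ) * pk ((j : ℂ) - i + 1 + k) (i - k) *
        pk (a - i) (i - k) * pk y k * pk (x - k) k = (-1) ^ i * cSum x y a i j := by
    rw [cSum, ← Finset.sum_flip, Finset.mul_sum, Finset.mul_sum]
    apply Finset.sum_congr rfl
    intro m hm
    obtain ⟨k, rfl⟩ := Nat.exists_eq_add_of_le (Nat.lt_succ_iff.mp (Finset.mem_range.mp hm))
    obtain ⟨d, rfl⟩ := Nat.exists_eq_add_of_le hij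
    have e1 : m + k - m = k := by omega
    have e2 : m + k - k = m := by omega
    have e3 : m + k + d - (m + k) = d := by omega
    have e4 : m + k + d - m = k + d := by omega
    have e5 : (m + k).choose k = (m + k).choose m := Nat.choose_symm_add.symm
    rw [e1, e2, e3, e4, e5]
    have f1 : ((m + k + d : ℕ) : ℂ) - ((m + k : ℕ) : ℂ) + 1 + k = ((k + d : ℕ) : ℂ) + 1 := by
      push_cast; ring
    have f2 : a - ((m + k : ℕ) : ℂ) = (a - k) - m := by push_cast; ring
    have f3 : x - ((m + k : ℕ) : ℂ) + m = x - k := by push_cast; ring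
    have f4 : 1 + ((m + k : ℕ) : ℂ) - m - a = 1 - (a - k) := by push_cast; ring
    rw [f1, f2, f3, f4, pk_nat, pk_reflect (a - k) m, pk_add (x - k) k d, sub_add_cancel,
      show k + d + m = m + k + d by ring]
    ring
  have hs : ((-1 : ℂ) ^ i) * (-1) ^ i = 1 := by rw [← mul_pow]; simp
  have hs' : ((-1 : ℂ) ^ i)⁻¹ = (-1) ^ i := by
    rw [inv_eq_iff_eq_inv]; exact eq_inv_of_mul_eq_one_left hs
  rw [div_mul_eq_mul_div, mul_assoc _ (pk x (j - i)), key]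
  simp only [div_eq_mul_inv, mul_inv, hs']
  linear_combination ((-1) ^ (i + j) * pk (-(N : ℂ)) (i + j) * cSum x y a i j *
    (2 ^ (i + j) : ℂ)⁻¹ * (i.factorial : ℂ)⁻¹ * (j.factorial : ℂ)⁻¹ *
    (pk (1 - (mu + (n : ℂ) * 2⁻¹)) j)⁻¹ * (pk (1 - a) i)⁻¹) * hs

lemma Aext_eq (n N : ℕ) (lam mu : ℂ) (i j : ℕ) :
    Aext n N lam mu i j = wt N i j *
      cRec (lam - N + 1) (mu - N + 1) (mu + (n : ℂ) / 2) i j /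
        (pk (1 - (lam + (n : ℂ) / 2)) i * pk (1 - (mu + (n : ℂ) / 2)) j) := by
  rw [Aext]
  split_ifs with h
  · rw [A_eq _ _ _ _ _ _ h, cSum_eq_cRec _ _ _ (mu + (n : ℂ) / 2) (by ring)]
  · rw [A_eq _ _ _ _ _ _ (by omega), cSum_eq_cRec _ _ _ (lam + (n : ℂ) / 2) (by ring),
      cRec_symm _ _ (mu + (n : ℂ) / 2) _ (by ring), wt_symm, mul_comm (pk _ j)]

lemma Aext_symm (n N : ℕ) (lam mu : ℂ) (i j : ℕ) :
    Aext n N lam mu i j = Aext n N mu lam j i := by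
  rw [Aext_eq, Aext_eq, cRec_symm _ _ (lam + (n : ℂ) / 2) _ (by ring), wt_symm, mul_comm (pk _ i)]

/-- The recurrence for the coefficients which says, for `i + j < N`, that the coefficient of
`s^i t^j r^(N-1-i-j)` in `D₁ p_N` vanishes; with `λ, μ` and `i, j` exchanged it gives `D₂ p_N = 0`. -/
lemma Aext_rec (n N : ℕ) (lam mu : ℂ)
    (hlam : ∀ m : ℕ, lam ≠ (m : ℂ) - (n : ℂ) / 2)
    (hmu : ∀ m : ℕ, mu ≠ (m : ℂ) - (n : ℂ) / 2) (i j : ℕ) :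
    (1 / 2) * ((N - i - j + 1) * (N - i - j) *
        (if j = 0 then 0 else Aext n N lam mu i (j - 1))) +
      (n + 2 * lam - 2 - 2 * i) * ((i + 1) * Aext n N lam mu (i + 1) j) -
      (N - 1 - i + j - mu) * ((N - i - j) * Aext n N lam mu i j) = 0 := by
  have hA : ∀ m : ℕ, 1 - (lam + (n : ℂ) / 2) + m ≠ 0 := fun m hm =>
    hlam (m + 1) (by push_cast; linear_combination -hm)
  have hB : ∀ m : ℕ, 1 - (mu + (n : ℂ) / 2) + m ≠ 0 := fun m hm =>
    hmu (m + 1) (by push_cast; linear_combination -hm)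
  have hP := pk_ne_zero i hA
  have hQ := pk_ne_zero j hB
  have w1 := wt_succ_left N i j
  have rec1 := cRec_succ (lam - N + 1) (mu - N + 1) (mu + (n : ℂ) / 2) i j
  -- all three terms are brought to the common denominator `(1-a)_i (1-b)_j`
  have t1 : (N - i - j + 1 : ℂ) * (if j = 0 then 0 else Aext n N lam mu i (j - 1)) =
      2 * wt N i j * (j * (j - (mu + (n : ℂ) / 2)) *
        cRec (lam - N + 1) (mu - N + 1) (mu + (n : ℂ) / 2) i (j - 1)) /
        (pk (1 - (lam + (n : ℂ) / 2)) i * pk (1 - (mu + (n : ℂ) / 2)) j) := by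
    cases j with
    | zero => simp
    | succ j =>
      have w2 := wt_succ_right N i j
      have hQ' := pk_ne_zero j hB
      have hb := hB j
      rw [if_neg (Nat.succ_ne_zero j), Nat.add_sub_cancel, Aext_eq, pk_succ]
      rw [mul_div_assoc', div_eq_div_iff (mul_ne_zero hP hQ')
        (mul_ne_zero hP (mul_ne_zero hQ' hb))]
      push_cast
      linear_combination (-(j + 1 - (mu + (n : ℂ) / 2)) *
        cRec (lam - N + 1) (mu - N + 1) (mu + (n : ℂ) / 2) i j *
        (pk (1 - (lam + (n : ℂ) / 2)) i * pk (1 - (mu + (n : ℂ) / 2)) j)) * w2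
  have t2 : (n + 2 * lam - 2 - 2 * i : ℂ) * ((i + 1) * Aext n N lam mu (i + 1) j) =
      -((N - i - j) * wt N i j *
        cRec (lam - N + 1) (mu - N + 1) (mu + (n : ℂ) / 2) (i + 1) j) /
        (pk (1 - (lam + (n : ℂ) / 2)) i * pk (1 - (mu + (n : ℂ) / 2)) j) := by
    have ha := hA i
    rw [Aext_eq, pk_succ, mul_div_assoc', mul_div_assoc',
      div_eq_div_iff (mul_ne_zero (mul_ne_zero hP ha) hQ) (mul_ne_zero hP hQ)]
    linear_combination (-(1 - (lam + (n : ℂ) / 2) + i) *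
        cRec (lam - N + 1) (mu - N + 1) (mu + (n : ℂ) / 2) (i + 1) j *
        (pk (1 - (lam + (n : ℂ) / 2)) i * pk (1 - (mu + (n : ℂ) / 2)) j)) * w1
  rw [t2, Aext_eq n N lam mu i j, rec1]
  linear_combination (1 / 2 * (N - i - j) : ℂ) * t1

/-! ### Coefficients of polynomials in `r, s, t` -/

/-- The coefficient of `r^u s^i t^j` in `p`. -/
def cf (p : S) (u i j : ℕ) : ℂ := coeff (Finsupp.equivFunOnFinite.symm ![u, i, j]) p

lemma cf_ext {p q : S} (h : ∀ u i j, cf p u i j = cf q u i j) : p = q := by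
  ext m
  have hm : m = Finsupp.equivFunOnFinite.symm ![m 0, m 1, m 2] := by
    ext k; fin_cases k <;> rfl
  rw [hm]; exact h _ _ _

lemma cf_add (p q : S) (u i j : ℕ) : cf (p + q) u i j = cf p u i j + cf q u i j := by
  simp [cf]

lemma cf_sub (p q : S) (u i j : ℕ) : cf (p - q) u i j = cf p u i j - cf q u i j := by
  simp [cf]

lemma cf_C_mul (z : ℂ) (p : S) (u i j : ℕ) : cf (C z * p) u i j = z * cf p u i j := by
  simp [cf]

lemma cf_two_mul (p : S) (u i j : ℕ) : cf (2 * p) u i j = 2 * cf p u i j := by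
  rw [two_mul, cf_add, two_mul]

lemma cf_dr (p : S) (u i j : ℕ) : cf (dr p) u i j = (u + 1) * cf p (u + 1) i j := by
  have h : Finsupp.equivFunOnFinite.symm ![u, i, j] + Finsupp.single 0 1
      = Finsupp.equivFunOnFinite.symm ![u + 1, i, j] := by
    ext k; fin_cases k <;> simp
  simp [cf, dr, coeff_pderiv, h, mul_comm]

lemma cf_ds (p : S) (u i j : ℕ) : cf (ds p) u i j = (i + 1) * cf p u (i + 1) j := by
  have h : Finsupp.equivFunOnFinite.symm ![u, i, j] + Finsupp.single 1 1
      = Finsupp.equivFunOnFinite.symm ![u, i + 1, j] := by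
    ext k; fin_cases k <;> simp
  simp [cf, ds, coeff_pderiv, h, mul_comm]

lemma cf_dt (p : S) (u i j : ℕ) : cf (dt p) u i j = (j + 1) * cf p u i (j + 1) := by
  have h : Finsupp.equivFunOnFinite.symm ![u, i, j] + Finsupp.single 2 1
      = Finsupp.equivFunOnFinite.symm ![u, i, j + 1] := by
    ext k; fin_cases k <;> simp
  simp [cf, dt, coeff_pderiv, h, mul_comm]

lemma cf_rr (p : S) (u i j : ℕ) :
    cf (rr * p) u i j = if u = 0 then 0 else cf p (u - 1) i j := by
  have h : Finsupp.equivFunOnFinite.symm ![u, i, j] - Finsupp.single 0 1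
      = Finsupp.equivFunOnFinite.symm ![u - 1, i, j] := by
    ext k; fin_cases k <;> simp
  simp [cf, rr, coeff_X_mul', h]

lemma cf_ss (p : S) (u i j : ℕ) :
    cf (ss * p) u i j = if i = 0 then 0 else cf p u (i - 1) j := by
  have h : Finsupp.equivFunOnFinite.symm ![u, i, j] - Finsupp.single 1 1
      = Finsupp.equivFunOnFinite.symm ![u, i - 1, j] := by
    ext k; fin_cases k <;> simp
  simp [cf, ss, coeff_X_mul', h]

lemma cf_tt (p : S) (u i j : ℕ) :
    cf (tt * p) u i j = if j = 0 then 0 else cf p u i (j - 1) := by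
  have h : Finsupp.equivFunOnFinite.symm ![u, i, j] - Finsupp.single 2 1
      = Finsupp.equivFunOnFinite.symm ![u, i, j - 1] := by
    ext k; fin_cases k <;> simp
  simp [cf, tt, coeff_X_mul', h]

lemma cf_Er (p : S) (u i j : ℕ) : cf (Er p) u i j = u * cf p u i j := by
  rw [Er, cf_rr, cf_dr]; cases u <;> simp

lemma cf_Es (p : S) (u i j : ℕ) : cf (Es p) u i j = i * cf p u i j := by
  rw [Es, cf_ss, cf_ds]; cases i <;> simp

lemma cf_Et (p : S) (u i j : ℕ) : cf (Et p) u i j = j * cf p u i j := by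
  rw [Et, cf_tt, cf_dt]; cases j <;> simp

lemma cf_pN (n N : ℕ) (lam mu : ℂ) (u i j : ℕ) :
    cf (pN n N lam mu) u i j = if u + i + j = N then Aext n N lam mu i j else 0 := by
  have hmon : ∀ (z : ℂ) (a b c : ℕ), C z * ss ^ a * tt ^ b * rr ^ c =
      monomial (Finsupp.equivFunOnFinite.symm ![c, a, b]) z := by
    intro z a b c
    have h : Finsupp.equivFunOnFinite.symm ![c, a, b] =
        Finsupp.single 1 a + Finsupp.single 2 b + Finsupp.single (0 : Fin 3) c := by
      ext k; fin_cases k <;> simp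
    rw [h, ss, tt, rr, X_pow_eq_monomial, X_pow_eq_monomial, X_pow_eq_monomial, C_mul_monomial,
      monomial_mul, monomial_mul]
    simp
  have hinj : ∀ a b c : ℕ, Finsupp.equivFunOnFinite.symm ![c, a, b] =
      Finsupp.equivFunOnFinite.symm ![u, i, j] ↔ (c = u ∧ a = i ∧ b = j) := by
    intro a b c
    rw [EmbeddingLike.apply_eq_iff_eq]
    simp
  simp only [cf, pN, hmon, coeff_sum, coeff_monomial, hinj]
  split_ifs with h
  · rw [Finset.sum_eq_single i, Finset.sum_eq_single j]
    · rw [if_pos]; omega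
    · intro b _ hb; rw [if_neg]; tauto
    · intro hb; exact absurd (Finset.mem_range.mpr (by omega)) hb
    · intro a _ ha; apply Finset.sum_eq_zero; intro b _; rw [if_neg]; tauto
    · intro ha; exact absurd (Finset.mem_range.mpr (by omega)) ha
  · apply Finset.sum_eq_zero; intro a ha
    apply Finset.sum_eq_zero; intro b hb
    rw [Finset.mem_range] at ha hb
    rw [if_neg]; omega

/-- the homogeneous degree-`N` polynomial `p_N(λ,μ)` is annihilated by
both `D₁(λ,μ)` and `D₂(λ,μ)`. -/
theorem statement1 (n : ℕ) (hn : 3 ≤ n) (N : ℕ) (lam mu : ℂ)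
    (hlam : ∀ m : ℕ, lam ≠ (m : ℂ) - (n : ℂ) / 2)
    (hmu : ∀ m : ℕ, mu ≠ (m : ℂ) - (n : ℂ) / 2) :
    D1 n lam mu (pN n N lam mu) = 0 ∧ D2 n lam mu (pN n N lam mu) = 0 := by
  constructor
  · apply cf_ext
    intro u i j
    have hz : cf 0 u i j = 0 := by simp [cf]
    rw [hz, D1, mul_assoc]
    simp only [cf_sub, cf_add, cf_C_mul, cf_two_mul, cf_Er, cf_Es, cf_Et, cf_tt, cf_dr, cf_ds,
      cf_pN]
    by_cases hN : u + 1 + i + j = N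
    · have hN' : (N : ℂ) = u + 1 + i + j := by rw [← hN]; push_cast; ring
      have key := Aext_rec n N lam mu hlam hmu i j
      rw [if_pos (show u + (i + 1) + j = N by omega), if_pos hN]
      rcases j with _ | j
      · simp only [if_true] at key ⊢
        rw [hN'] at key
        linear_combination key
      · rw [if_neg (by omega)] at key ⊢
        rw [if_pos (by omega)]
        rw [hN'] at key
        push_cast at key ⊢
        linear_combination key
    · rw [if_neg hN, if_neg (show ¬ u + (i + 1) + j = N by omega)]
      rcases j with _ | j
      · simp
      · rw [if_neg (by omega), if_neg (by omega)]; simp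
  · apply cf_ext
    intro u i j
    have hz : cf 0 u i j = 0 := by simp [cf]
    rw [hz, D2, mul_assoc]
    simp only [cf_sub, cf_add, cf_C_mul, cf_two_mul, cf_Er, cf_Es, cf_Et, cf_ss, cf_dr, cf_dt,
      cf_pN]
    by_cases hN : u + 1 + i + j = N
    · have hN' : (N : ℂ) = u + 1 + i + j := by rw [← hN]; push_cast; ring
      have key := Aext_rec n N mu lam hmu hlam j i
      simp only [Aext_symm n N mu lam] at key
      rw [if_pos (show u + i + (j + 1) = N by omega), if_pos hN]
      rcases i with _ | i
      · simp only [if_true] at key ⊢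
        rw [hN'] at key
        linear_combination key
      · rw [if_neg (by omega)] at key ⊢
        rw [if_pos (by omega)]
        rw [hN'] at key
        push_cast at key ⊢
        linear_combination key
    · rw [if_neg hN, if_neg (show ¬ u + i + (j + 1) = N by omega)]
      rcases i with _ | i
      · simp
      · rw [if_neg (by omega), if_neg (by omega)]; simp

end
end

section
/- Let n ≥ 3 be an integer and λ, μ ∈ ℂ. For every polynomial p ∈ ℂ[r,s,t] and every l ∈ {1,…,n}, one has the identity P_l(λ,μ)(Φ(p)) = ξ_l · Φ(D₁(λ,μ)(p)) + ν_l · Φ(D₂(λ,μ)(p)) in ℂ[ξ₁,…,ξ_n,ν₁,…,ν_n]. (This is the reduction of the nilradical action from the polynomial ring in 2n variables to the ring of invariants ℂ[r,s,t].) -/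
/-!
By the chain rule the first derivatives of an invariant polynomial are
`∂_{ξ_l} Φ(p) = ν_l Φ(∂_r p) + 2 ξ_l Φ(∂_s p)` and `∂_{ν_l} Φ(p) = ξ_l Φ(∂_r p) + 2 ν_l Φ(∂_t p)`
(`pderiv_inl_Phi`, `pderiv_inr_Phi`). Contracting them with `ξ` or `ν`, or differentiating once more
and summing, expresses the Euler operators and the Laplacians on `Φ(p)` through `Φ` alone, because
`∑ ξᵢνᵢ`, `∑ ξᵢ²`, `∑ νᵢ²` are `Φ(r)`, `Φ(s)`, `Φ(t)`. The identity then follows by comparing the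
coefficients of `ξ_l` and `ν_l`, where the mixed terms `r ∂_r ∂_s` and `r ∂_r ∂_t` cancel.
-/

open MvPolynomial Finset

noncomputable section

/-- The polynomial ring `ℂ[ξ₁,…,ξ_n,ν₁,…,ν_n]`. -/
abbrev R (n : ℕ) := MvPolynomial (Fin n ⊕ Fin n) ℂ

def ξ (n : ℕ) (l : Fin n) : R n := X (Sum.inl l)
def ν (n : ℕ) (l : Fin n) : R n := X (Sum.inr l)

/-- The algebra homomorphism `Φ : ℂ[r,s,t] → ℂ[ξ,ν]` with
`Φ(r) = Σ ξᵢνᵢ`, `Φ(s) = Σ ξᵢ²`, `Φ(t) = Σ νᵢ²`. -/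
def Phi (n : ℕ) : S →ₐ[ℂ] R n :=
  aeval ![∑ i : Fin n, ξ n i * ν n i, ∑ i : Fin n, ξ n i ^ 2, ∑ i : Fin n, ν n i ^ 2]

def Δξ (n : ℕ) (F : R n) : R n := ∑ i : Fin n, pderiv (Sum.inl i) (pderiv (Sum.inl i) F)
def Δν (n : ℕ) (F : R n) : R n := ∑ i : Fin n, pderiv (Sum.inr i) (pderiv (Sum.inr i) F)
def Eξ (n : ℕ) (F : R n) : R n := ∑ i : Fin n, ξ n i * pderiv (Sum.inl i) F
def Eν (n : ℕ) (F : R n) : R n := ∑ i : Fin n, ν n i * pderiv (Sum.inr i) F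

/-- The operator `P_l(λ,μ) = ½ ξ_l Δ^ξ + (λ−E^ξ)∂_{ξ_l} + ½ ν_l Δ^ν + (μ−E^ν)∂_{ν_l}`. -/
def Pop (n : ℕ) (lam mu : ℂ) (l : Fin n) (F : R n) : R n :=
  C (1 / 2 : ℂ) * ξ n l * Δξ n F +
    (C lam * pderiv (Sum.inl l) F - Eξ n (pderiv (Sum.inl l) F)) +
    C (1 / 2 : ℂ) * ν n l * Δν n F +
    (C mu * pderiv (Sum.inr l) F - Eν n (pderiv (Sum.inr l) F))

lemma Phi_rr (n : ℕ) : Phi n rr = ∑ i : Fin n, ξ n i * ν n i := by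
  simp [Phi, rr]

lemma Phi_ss (n : ℕ) : Phi n ss = ∑ i : Fin n, ξ n i ^ 2 := by
  simp [Phi, ss]

lemma Phi_tt (n : ℕ) : Phi n tt = ∑ i : Fin n, ν n i ^ 2 := by
  simp [Phi, tt]

lemma Phi_C (n : ℕ) (a : ℂ) : Phi n (C a) = C a := by
  simp [Phi, algebraMap_eq]

/-- The chain rule for the derivative of a polynomial evaluated in another polynomial ring. -/
lemma pderiv_aeval {σ τ : Type*} [Fintype σ] (f : σ → MvPolynomial τ ℂ) (i : τ)
    (p : MvPolynomial σ ℂ) :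
    pderiv i (aeval f p) = ∑ j, aeval f (pderiv j p) * pderiv i (f j) := by
  classical
  induction p using MvPolynomial.induction_on with
  | C a => simp [algebraMap_eq]
  | add p q hp hq => simp only [map_add, hp, hq, add_mul, Finset.sum_add_distrib]
  | mul_X p k hp =>
    simp only [map_mul, aeval_X, Derivation.leibniz, hp, smul_eq_mul, map_add, pderiv_X, add_mul,
      Finset.sum_add_distrib, Finset.mul_sum]
    congr 1
    · rw [Finset.sum_eq_single k]
      · simp
      · intro b _ hb
        simp [Pi.single_eq_of_ne hb.symm]
      · simp
    · exact Finset.sum_congr rfl fun j _ => by ring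

lemma pderiv_inl_Phi (n : ℕ) (l : Fin n) (p : S) :
    pderiv (Sum.inl l) (Phi n p) = ν n l * Phi n (dr p) + 2 * ξ n l * Phi n (ds p) := by
  classical
  rw [Phi, pderiv_aeval]
  simp [Fin.sum_univ_three, ξ, ν, dr, ds, Derivation.leibniz, Derivation.leibniz_pow, pderiv_X,
    Pi.single_apply]
  ring

lemma pderiv_inr_Phi (n : ℕ) (l : Fin n) (p : S) :
    pderiv (Sum.inr l) (Phi n p) = ξ n l * Phi n (dr p) + 2 * ν n l * Phi n (dt p) := by
  classical
  rw [Phi, pderiv_aeval]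
  simp [Fin.sum_univ_three, ξ, ν, dr, dt, Derivation.leibniz, Derivation.leibniz_pow, pderiv_X,
    Pi.single_apply]
  ring

lemma Eξ_Phi (n : ℕ) (p : S) :
    Eξ n (Phi n p) = Phi n rr * Phi n (dr p) + 2 * Phi n ss * Phi n (ds p) := by
  rw [Phi_rr, Phi_ss]
  simp only [Eξ, pderiv_inl_Phi, Finset.sum_mul, Finset.mul_sum, ← Finset.sum_add_distrib]
  exact Finset.sum_congr rfl fun i _ => by ring

lemma Eν_Phi (n : ℕ) (p : S) :
    Eν n (Phi n p) = Phi n rr * Phi n (dr p) + 2 * Phi n tt * Phi n (dt p) := by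
  rw [Phi_rr, Phi_tt]
  simp only [Eν, pderiv_inr_Phi, Finset.sum_mul, Finset.mul_sum, ← Finset.sum_add_distrib]
  exact Finset.sum_congr rfl fun i _ => by ring

lemma pderiv_pderiv_comm (i j : Fin 3) (p : S) : pderiv i (pderiv j p) = pderiv j (pderiv i p) := by
  classical
  have h : ⁅(pderiv i : Derivation ℂ S S), (pderiv j : Derivation ℂ S S)⁆ = 0 := by
    refine MvPolynomial.derivation_ext fun k => ?_
    rw [Derivation.commutator_apply]
    simp only [pderiv_X, Pi.single_apply]
    split_ifs <;> simp
  rw [← sub_eq_zero, ← Derivation.commutator_apply, h, Derivation.zero_apply]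

lemma dr_ds_comm (p : S) : dr (ds p) = ds (dr p) := pderiv_pderiv_comm 0 1 p

lemma dr_dt_comm (p : S) : dr (dt p) = dt (dr p) := pderiv_pderiv_comm 0 2 p

lemma pderiv_two (n : ℕ) (i : Fin n ⊕ Fin n) : pderiv i (2 : R n) = 0 := by
  rw [← map_ofNat (C : ℂ →+* R n) 2, pderiv_C]

lemma Δξ_Phi (n : ℕ) (p : S) :
    Δξ n (Phi n p) = Phi n tt * Phi n (dr (dr p)) + 4 * Phi n rr * Phi n (ds (dr p)) +
      4 * Phi n ss * Phi n (ds (ds p)) + 2 * (n : R n) * Phi n (ds p) := by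
  have key (i : Fin n) : pderiv (Sum.inl i) (pderiv (Sum.inl i) (Phi n p)) =
      ν n i ^ 2 * Phi n (dr (dr p)) + 4 * (ξ n i * ν n i) * Phi n (ds (dr p)) +
        4 * ξ n i ^ 2 * Phi n (ds (ds p)) + 2 * Phi n (ds p) := by
    have h1 : pderiv (Sum.inl i) (ξ n i) = 1 := by simp [ξ]
    have h2 : pderiv (Sum.inl i) (ν n i) = 0 := by simp [ν, pderiv_X]
    simp only [pderiv_inl_Phi, map_add, Derivation.leibniz, smul_eq_mul, h1, h2, pderiv_two,
      dr_ds_comm]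
    ring
  rw [Phi_rr, Phi_ss, Phi_tt, Δξ, Finset.sum_congr rfl fun i _ => key i]
  simp only [Finset.sum_add_distrib, ← Finset.sum_mul, ← Finset.mul_sum, Finset.sum_const,
    Finset.card_univ, Fintype.card_fin, nsmul_eq_mul]
  ring

lemma Δν_Phi (n : ℕ) (p : S) :
    Δν n (Phi n p) = Phi n ss * Phi n (dr (dr p)) + 4 * Phi n rr * Phi n (dt (dr p)) +
      4 * Phi n tt * Phi n (dt (dt p)) + 2 * (n : R n) * Phi n (dt p) := by
  have key (i : Fin n) : pderiv (Sum.inr i) (pderiv (Sum.inr i) (Phi n p)) =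
      ξ n i ^ 2 * Phi n (dr (dr p)) + 4 * (ξ n i * ν n i) * Phi n (dt (dr p)) +
        4 * ν n i ^ 2 * Phi n (dt (dt p)) + 2 * Phi n (dt p) := by
    have h1 : pderiv (Sum.inr i) (ν n i) = 1 := by simp [ν]
    have h2 : pderiv (Sum.inr i) (ξ n i) = 0 := by simp [ξ, pderiv_X]
    simp only [pderiv_inr_Phi, map_add, Derivation.leibniz, smul_eq_mul, h1, h2, pderiv_two,
      dr_dt_comm]
    ring
  rw [Phi_rr, Phi_ss, Phi_tt, Δν, Finset.sum_congr rfl fun i _ => key i]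
  simp only [Finset.sum_add_distrib, ← Finset.sum_mul, ← Finset.mul_sum, Finset.sum_const,
    Finset.card_univ, Fintype.card_fin, nsmul_eq_mul]
  ring

/-- The Euler operator applied to `∂_{ξ_l} Φ(p)`, with the factor `ξ_l` contributing the
extra `2 ξ_l Φ(∂_s p)`. -/
lemma Eξ_pderiv_Phi (n : ℕ) (l : Fin n) (p : S) :
    Eξ n (pderiv (Sum.inl l) (Phi n p)) =
      ν n l * Eξ n (Phi n (dr p)) + 2 * ξ n l * Phi n (ds p) +
        2 * ξ n l * Eξ n (Phi n (ds p)) := by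
  classical
  have h1 (i : Fin n) : pderiv (Sum.inl i) (ξ n l) = if l = i then 1 else 0 := by
    simp [ξ, pderiv_X, Pi.single_apply]
  have h2 (i : Fin n) : pderiv (Sum.inl i) (ν n l) = 0 := by simp [ν, pderiv_X]
  have h3 : 2 * ξ n l * Phi n (ds p) =
      ∑ i, ξ n i * (2 * (if l = i then 1 else 0) * Phi n (ds p)) := by
    simp; ring
  rw [h3]
  simp only [Eξ, Finset.mul_sum, ← Finset.sum_add_distrib]
  refine Finset.sum_congr rfl fun i _ => ?_
  rw [pderiv_inl_Phi n l]
  simp only [map_add, Derivation.leibniz, smul_eq_mul, h1, h2, pderiv_two]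
  ring

/-- The Euler operator applied to `∂_{ν_l} Φ(p)`, with the factor `ν_l` contributing the
extra `2 ν_l Φ(∂_t p)`. -/
lemma Eν_pderiv_Phi (n : ℕ) (l : Fin n) (p : S) :
    Eν n (pderiv (Sum.inr l) (Phi n p)) =
      ξ n l * Eν n (Phi n (dr p)) + 2 * ν n l * Phi n (dt p) +
        2 * ν n l * Eν n (Phi n (dt p)) := by
  classical
  have h1 (i : Fin n) : pderiv (Sum.inr i) (ν n l) = if l = i then 1 else 0 := by
    simp [ν, pderiv_X, Pi.single_apply]
  have h2 (i : Fin n) : pderiv (Sum.inr i) (ξ n l) = 0 := by simp [ξ, pderiv_X]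
  have h3 : 2 * ν n l * Phi n (dt p) =
      ∑ i, ν n i * (2 * (if l = i then 1 else 0) * Phi n (dt p)) := by
    simp; ring
  rw [h3]
  simp only [Eν, Finset.mul_sum, ← Finset.sum_add_distrib]
  refine Finset.sum_congr rfl fun i _ => ?_
  rw [pderiv_inr_Phi n l]
  simp only [map_add, Derivation.leibniz, smul_eq_mul, h1, h2, pderiv_two]
  ring

/-- reduction of the nilradical action to the ring of invariants:
`P_l(λ,μ)(Φ(p)) = ξ_l · Φ(D₁(λ,μ)(p)) + ν_l · Φ(D₂(λ,μ)(p))`. -/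
theorem statement4 (n : ℕ) (hn : 3 ≤ n) (lam mu : ℂ) (p : S) (l : Fin n) :
    Pop n lam mu l (Phi n p) =
      ξ n l * Phi n (D1 n lam mu p) + ν n l * Phi n (D2 n lam mu p) := by
  have hhalf : (C (1 / 2 : ℂ) : R n) * 2 = 1 := by
    rw [← map_ofNat (C : ℂ →+* R n) 2, ← map_mul]
    norm_num
  have hcast : (C (n : ℂ) : R n) = (n : R n) := map_natCast C n
  rw [Pop, Eξ_pderiv_Phi, Eν_pderiv_Phi]
  simp only [Δξ_Phi, Δν_Phi, Eξ_Phi, Eν_Phi, pderiv_inl_Phi, pderiv_inr_Phi, D1, D2, Er, Es, Et,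
    map_add, map_sub, map_mul, Phi_C, map_ofNat, dr_ds_comm, dr_dt_comm, hcast]
  -- `½ * 2 = 1` is applied to the Laplacian terms with even coefficients; the remaining terms
  -- `½ t ∂_r²` and `½ s ∂_r²` carry the same factor `½` on both sides.
  linear_combination
    (ξ n l * (2 * Phi n rr * Phi n (ds (dr p)) + 2 * Phi n ss * Phi n (ds (ds p)) +
        n * Phi n (ds p)) +
      ν n l * (2 * Phi n rr * Phi n (dt (dr p)) + 2 * Phi n tt * Phi n (dt (dt p)) +
        n * Phi n (dt p))) * hhalf

end
end

section
/- Let n ≥ 1 be an integer. For every polynomial p ∈ ℂ[r,s,t] and every index l ∈ {1,…,n}, one has E^ξ(∂_{ξ_l}(Φ(p))) = ν_l · Φ((E^r + 2E^s)(∂_r p)) + ξ_l · Φ((2E^r + 4E^s + 2)(∂_s p)) in ℂ[ξ₁,…,ξ_n,ν₁,…,ν_n], where E^ξ = Σ_{i=1}^n ξᵢ∂_{ξᵢ} is the Euler operator in the ξ-variables and E^r = r∂_r, E^s = s∂_s. -/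
/-!
The chain rule gives `∂_{ξ_l} (Φ q) = ν_l Φ(∂_r q) + 2 ξ_l Φ(∂_s q)` (`pderiv_Phi`). Multiplying by
`ξ_l` and summing over `l` yields `E^ξ (Φ q) = Φ((E^r + 2 E^s) q)` (`Exi_Phi`). Since `E^ξ` is a
derivation with `E^ξ ν_l = 0` and `E^ξ ξ_l = ξ_l`, applying it to the chain rule for `p` gives the
claim; the term `2 ∂_s p` comes from `E^ξ ξ_l = ξ_l`.
-/

open MvPolynomial Finset

noncomputable section

/-- The chain rule for `Φ`; there is no `∂_t` term because `Φ(t)` does not involve the ξ-variables. -/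
lemma pderiv_Phi (n : ℕ) (q : S) (l : Fin n) :
    pderiv (Sum.inl l) (Phi n q) = ν n l * Phi n (dr q) + 2 * ξ n l * Phi n (ds q) := by
  induction q using MvPolynomial.induction_on with
  | C a => simp [Phi, dr, ds, MvPolynomial.algebraMap_eq]
  | add p q hp hq =>
    simp only [dr, ds, map_add] at *
    rw [hp, hq]; ring
  | mul_X p j hp =>
    have hX : pderiv (Sum.inl l) (Phi n (X j)) =
        ν n l * Phi n (dr (X j)) + 2 * ξ n l * Phi n (ds (X j)) := by
      fin_cases j <;>
        simp [Phi, dr, ds, ξ, ν, pderiv_X, Pi.single_apply, Derivation.leibniz_pow]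
    simp only [dr, ds, map_mul, map_add, Derivation.leibniz, smul_eq_mul] at *
    rw [hp, hX]; ring

lemma Exi_Phi (n : ℕ) (q : S) : Eξ n (Phi n q) = Phi n (Er q + 2 * Es q) := by
  have hr : Phi n rr = ∑ i : Fin n, ξ n i * ν n i := by simp [Phi, rr]
  have hs : Phi n ss = ∑ i : Fin n, ξ n i ^ 2 := by simp [Phi, ss]
  simp only [Eξ, pderiv_Phi, Er, Es, map_add, map_mul, map_ofNat, hr, hs, Finset.sum_mul,
    Finset.mul_sum, ← Finset.sum_add_distrib]
  exact Finset.sum_congr rfl fun i _ => by ring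

lemma Exi_add (n : ℕ) (F G : R n) : Eξ n (F + G) = Eξ n F + Eξ n G := by
  simp only [Eξ, map_add, mul_add, Finset.sum_add_distrib]

lemma Exi_mul (n : ℕ) (F G : R n) : Eξ n (F * G) = F * Eξ n G + G * Eξ n F := by
  simp only [Eξ, Derivation.leibniz, smul_eq_mul, Finset.mul_sum, ← Finset.sum_add_distrib]
  exact Finset.sum_congr rfl fun i _ => by ring

lemma Exi_nu (n : ℕ) (l : Fin n) : Eξ n (ν n l) = 0 := by
  simp [Eξ, ν, pderiv_X]

lemma Exi_two_xi (n : ℕ) (l : Fin n) : Eξ n (2 * ξ n l) = 2 * ξ n l := by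
  rw [two_mul, Exi_add]
  simp [Eξ, ξ, pderiv_X, Pi.single_apply]

/-- `E^ξ(∂_{ξ_l}(Φ(p))) = ν_l · Φ((E^r+2E^s)(∂_r p)) + ξ_l · Φ((2E^r+4E^s+2)(∂_s p))`. -/
theorem statement7 (n : ℕ) (hn : 1 ≤ n) (p : S) (l : Fin n) :
    Eξ n (pderiv (Sum.inl l) (Phi n p)) =
      ν n l * Phi n (Er (dr p) + 2 * Es (dr p)) +
        ξ n l * Phi n (2 * Er (ds p) + 4 * Es (ds p) + 2 * ds p) := by
  rw [pderiv_Phi, Exi_add, Exi_mul, Exi_mul, Exi_nu, Exi_two_xi, Exi_Phi, Exi_Phi]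
  simp only [map_add, map_mul, map_ofNat]
  ring

end
end
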